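/- Let L̂ : L_p(μ) → ℂ be a continuous m-homogeneous polynomial, m ≥ 2, on a complex L_p(μ) space with m′ ≤ p ≤ m, where m′ = m/(m−1). Then for every k ≤ m and every x ∈ L_p(μ) with ‖x‖_p < 1, ‖D̂^k L̂(x)‖ ≤ k! · (1−‖x‖_p^{m′})^{−k/m′} · ‖L̂‖. -/

import Mathlib

open Metric MeasureTheory

/-!
The function `w ↦ F (x + w • y)` is entire, and only the part of it with the parity of `k`
contributes to its `k`-th derivative at `0`. Cauchy's estimate therefore needs a bound on the circle
`‖w‖ = R` only for the average of `‖F (x + w • y)‖` and `‖F (x - w • y)‖`, and homogeneity reduces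
this to `‖x + w • y‖ ^ m + ‖x - w • y‖ ^ m`. By Clarkson's inequality that sum is at most
`2 * (‖x‖ ^ m' + ‖w • y‖ ^ m') ^ (m - 1)`, hence at most `2` for `R ^ m' = 1 - ‖x‖ ^ m'`.

Clarkson's inequality with exponents `m'` and `m` passes from a Hilbert space to its `L_p` spaces,
`m' ≤ p ≤ m`, by using Minkowski's inequality twice: `L^p(ℓ^m)` dominates `ℓ^m(L^p)` and is in turn
compared with `L^p(ℓ^m')`, which is dominated by `ℓ^m'(L^p)`. In the Hilbert space convexity reduces
it to nonnegative scalars. There `(a + b) ^ m + (a - b) ^ m` is expanded binomially; weighted AM-GM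
is applied to each monomial, and the resulting sum is the derivative of a power.
-/

section ScalarClarkson

open Finset

theorem add_mul_pow_mul_pow_le (i j : ℕ) {u v : ℝ} (hu : 0 ≤ u) (hv : 0 ≤ v) :
    (i + j) * (u ^ i * v ^ j) ≤ i * u ^ (i + j) + j * v ^ (i + j) := by
  rcases Nat.eq_zero_or_pos (i + j) with hij | hij
  · simp [Nat.eq_zero_of_add_eq_zero hij]
  have hN : (0 : ℝ) < i + j := by exact_mod_cast hij
  have root_pow (t : ℝ) (ht : 0 ≤ t) (l : ℕ) : (t ^ (i + j)) ^ ((l : ℝ) / (i + j)) = t ^ l := by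
    rw [← Real.rpow_natCast, ← Real.rpow_mul ht, Nat.cast_add, mul_div_cancel₀ _ hN.ne',
      Real.rpow_natCast]
  have amgm := Real.geom_mean_le_arith_mean2_weighted (w₁ := i / (i + j)) (w₂ := j / (i + j))
    (by positivity) (by positivity) (pow_nonneg hu (i + j)) (pow_nonneg hv (i + j)) (by field_simp)
  rw [root_pow u hu, root_pow v hv] at amgm
  calc (i + j) * (u ^ i * v ^ j)
      ≤ (i + j) * (i / (i + j) * u ^ (i + j) + j / (i + j) * v ^ (i + j)) := by gcongr
    _ = i * u ^ (i + j) + j * v ^ (i + j) := by field_simp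

theorem add_pow_add_sub_pow_eq_sum_antidiagonal {R : Type*} [CommRing R] (x y : R) (m : ℕ) :
    (x + y) ^ m + (x - y) ^ m =
      ∑ ij ∈ antidiagonal m, (1 + (-1) ^ ij.2) * m.choose ij.1 * (x ^ ij.1 * y ^ ij.2) := by
  rw [sub_eq_add_neg, (Commute.all x y).add_pow', (Commute.all x (-y)).add_pow',
    ← sum_add_distrib]
  refine sum_congr rfl fun ij _ => ?_
  rw [neg_pow y, nsmul_eq_mul, nsmul_eq_mul]
  ring

-- Apply `∂/∂X + ∂/∂Y` to the identity above: only the power of `X + Y` survives.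
theorem sum_antidiagonal_choose_mul_deriv_monomial_eq {𝕜 : Type*} [NontriviallyNormedField 𝕜]
    (X Y : 𝕜) (n : ℕ) :
    ∑ ij ∈ antidiagonal (n + 1), (1 + (-1) ^ ij.2) * ((n + 1).choose ij.1 : 𝕜) *
        (ij.1 * X ^ (ij.1 - 1) * Y ^ ij.2 + X ^ ij.1 * (ij.2 * Y ^ (ij.2 - 1))) =
      2 * (n + 1) * (X + Y) ^ n := by
  have pow_add_id (Z : 𝕜) (i : ℕ) :
      HasDerivAt (fun t => (Z + t) ^ i) (i * Z ^ (i - 1)) 0 := by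
    simpa using ((hasDerivAt_id (0 : 𝕜)).const_add Z).fun_pow i
  have expanded := HasDerivAt.fun_sum (u := antidiagonal (n + 1)) fun ij _ =>
    ((pow_add_id X ij.1).fun_mul (pow_add_id Y ij.2)).const_mul
      ((1 + (-1) ^ ij.2) * ((n + 1).choose ij.1 : 𝕜))
  have closed : HasDerivAt (fun t => (X + t + (Y + t)) ^ (n + 1) + (X + t - (Y + t)) ^ (n + 1))
      (2 * (n + 1) * (X + Y) ^ n) 0 := by
    have linear : HasDerivAt (fun t : 𝕜 => X + t + (Y + t)) 2 0 := by
      simpa [one_add_one_eq_two] using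
        ((hasDerivAt_id (0 : 𝕜)).const_add X).fun_add ((hasDerivAt_id (0 : 𝕜)).const_add Y)
    have h := (linear.fun_pow (n + 1)).add_const ((X - Y) ^ (n + 1))
    simpa [mul_comm, mul_left_comm, mul_assoc] using h
  simp only [add_pow_add_sub_pow_eq_sum_antidiagonal] at closed
  simpa using expanded.unique closed

theorem mul_pow_pow_mul_pow_pow_le {i j n : ℕ} (hij : i + j = n + 1) {α β : ℝ} (hα : 0 ≤ α)
    (hβ : 0 ≤ β) :
    (n + 1) * ((α ^ n) ^ i * (β ^ n) ^ j) ≤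
      i * (α ^ (n + 1)) ^ (i - 1) * (β ^ (n + 1)) ^ j +
        (α ^ (n + 1)) ^ i * (j * (β ^ (n + 1)) ^ (j - 1)) := by
  have amgm := add_mul_pow_mul_pow_le i j (u := α ^ (i - 1) * β ^ j) (v := α ^ i * β ^ (j - 1))
    (by positivity) (by positivity)
  have hn : (n + 1 : ℝ) = i + j := by exact_mod_cast hij.symm
  rw [hn, ← hij]
  convert amgm using 1
  · have exponent {a b : ℕ} (hab : a + b = n + 1) : n * a = (a - 1) * a + a * b := by
      rcases a with _ | a
      · simp
      · obtain rfl : n = a + b := by omega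
        simp only [Nat.add_sub_cancel]
        ring
    rw [← pow_mul, ← pow_mul, exponent hij, exponent ((add_comm j i).trans hij)]
    ring
  · ring

theorem pow_add_pow_pow_add_sub_pow_le (n : ℕ) {α β : ℝ} (hα : 0 ≤ α) (hβ : 0 ≤ β) :
    (α ^ n + β ^ n) ^ (n + 1) + (α ^ n - β ^ n) ^ (n + 1) ≤
      2 * (α ^ (n + 1) + β ^ (n + 1)) ^ n := by
  have weight_nonneg (j : ℕ) : 0 ≤ 1 + (-1 : ℝ) ^ j := by
    rcases neg_one_pow_eq_or ℝ j with h | h <;> norm_num [h]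
  refine le_of_mul_le_mul_left ?_ (n.cast_add_one_pos (α := ℝ))
  rw [add_pow_add_sub_pow_eq_sum_antidiagonal, mul_sum]
  calc ∑ ij ∈ antidiagonal (n + 1), (n + 1) * ((1 + (-1) ^ ij.2) * ((n + 1).choose ij.1 : ℝ) *
          ((α ^ n) ^ ij.1 * (β ^ n) ^ ij.2))
      ≤ ∑ ij ∈ antidiagonal (n + 1), (1 + (-1) ^ ij.2) * ((n + 1).choose ij.1 : ℝ) *
          (ij.1 * (α ^ (n + 1)) ^ (ij.1 - 1) * (β ^ (n + 1)) ^ ij.2 +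
            (α ^ (n + 1)) ^ ij.1 * (ij.2 * (β ^ (n + 1)) ^ (ij.2 - 1))) := by
        refine sum_le_sum fun ij hij => ?_
        rw [mul_left_comm]
        exact mul_le_mul_of_nonneg_left (mul_pow_pow_mul_pow_pow_le (mem_antidiagonal.1 hij) hα hβ)
          (mul_nonneg (weight_nonneg _) (Nat.cast_nonneg _))
    _ = (n + 1) * (2 * (α ^ (n + 1) + β ^ (n + 1)) ^ n) := by
        rw [sum_antidiagonal_choose_mul_deriv_monomial_eq]
        ring

end ScalarClarkson

theorem add_pow_add_abs_sub_pow_le {m : ℕ} (hm : 2 ≤ m) {a b : ℝ} (ha : 0 ≤ a) (hb : 0 ≤ b) :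
    (a + b) ^ m + |a - b| ^ m ≤
      2 * (a ^ ((m : ℝ) / (m - 1)) + b ^ ((m : ℝ) / (m - 1))) ^ (m - 1) := by
  wlog hab : b ≤ a generalizing a b
  · simpa only [add_comm, abs_sub_comm] using this hb ha (le_of_not_ge hab)
  obtain ⟨n, rfl⟩ : ∃ n, m = n + 1 := ⟨m - 1, by omega⟩
  have hn : n ≠ 0 := by omega
  have root_pow_succ {t : ℝ} (ht : 0 ≤ t) :
      (t ^ (n⁻¹ : ℝ)) ^ (n + 1) = t ^ (((n + 1 : ℕ) : ℝ) / ((n + 1 : ℕ) - 1)) := by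
    rw [← Real.rpow_natCast, ← Real.rpow_mul ht, Nat.cast_succ, add_sub_cancel_right,
      div_eq_inv_mul]
  have h := pow_add_pow_pow_add_sub_pow_le n (Real.rpow_nonneg ha n⁻¹) (Real.rpow_nonneg hb n⁻¹)
  rwa [root_pow_succ ha, root_pow_succ hb, Real.rpow_inv_natCast_pow ha hn,
    Real.rpow_inv_natCast_pow hb hn, ← abs_of_nonneg (sub_nonneg.2 hab)] at h

theorem map_add_add_map_sub_le_of_convexOn {s : Set ℝ} {f : ℝ → ℝ} (hf : ConvexOn ℝ s f)
    {a t T : ℝ} (hadd : a + T ∈ s) (hsub : a - T ∈ s) (ht : |t| ≤ T) :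
    f (a + t) + f (a - t) ≤ f (a + T) + f (a - T) := by
  have ht' : t ∈ segment ℝ (-T) T := by
    rw [segment_eq_Icc (by linarith [abs_nonneg t])]
    exact abs_le.1 ht
  obtain ⟨u, v, hu, hv, huv, rfl⟩ := ht'
  have h_add := hf.2 hsub hadd hu hv huv
  have h_sub := hf.2 hadd hsub hu hv huv
  simp only [smul_eq_mul] at h_add h_sub ⊢
  have e_add : a + (u * -T + v * T) = u * (a - T) + v * (a + T) := by linear_combination -a * huv
  have e_sub : a - (u * -T + v * T) = u * (a + T) + v * (a - T) := by linear_combination -a * huv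
  rw [e_add, e_sub]
  linear_combination h_add + h_sub + (f (a + T) + f (a - T)) * huv

/-- Clarkson's inequality in `E` with inner exponent `r` and outer exponent `q`, the estimate that
controls `x + w • y` and `x - w • y` together. Classically `r = q / (q - 1)`, so that `q / r` is
`q - 1`. -/
def ClarksonInequality (r q : ℝ) (E : Type*) [SeminormedAddCommGroup E] : Prop :=
  ∀ x y : E, ‖x + y‖ ^ q + ‖x - y‖ ^ q ≤ 2 * (‖x‖ ^ r + ‖y‖ ^ r) ^ (q / r)

theorem norm_add_rpow_add_norm_sub_rpow_le (𝕜 : Type*) {E : Type*} [RCLike 𝕜]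
    [SeminormedAddCommGroup E] [InnerProductSpace 𝕜 E] {q : ℝ} (hq : 2 ≤ q) (x y : E) :
    ‖x + y‖ ^ q + ‖x - y‖ ^ q ≤ (‖x‖ + ‖y‖) ^ q + |‖x‖ - ‖y‖| ^ q := by
  have sq_rpow {t : ℝ} (ht : 0 ≤ t) : t ^ q = (t ^ 2) ^ (q / 2) := by
    rw [← Real.rpow_natCast_mul ht, Nat.cast_ofNat, mul_div_cancel₀ q two_ne_zero]
  rw [sq_rpow (norm_nonneg _), sq_rpow (norm_nonneg (x - y)), sq_rpow (by positivity),
    sq_rpow (abs_nonneg _), sq_abs, norm_add_sq (𝕜 := 𝕜), norm_sub_sq (𝕜 := 𝕜), add_sq, sub_sq]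
  have abs_re_inner_le : |RCLike.re (inner 𝕜 x y)| ≤ ‖x‖ * ‖y‖ :=
    (RCLike.abs_re_le_norm _).trans (norm_inner_le_norm x y)
  have h := map_add_add_map_sub_le_of_convexOn (convexOn_rpow (p := q / 2) (by linarith))
    (a := ‖x‖ ^ 2 + ‖y‖ ^ 2) (t := 2 * RCLike.re (inner 𝕜 x y)) (T := 2 * (‖x‖ * ‖y‖))
    (Set.mem_Ici.2 (by positivity)) (Set.mem_Ici.2 (by linarith [sq_nonneg (‖x‖ - ‖y‖)]))
    (by rwa [abs_mul, abs_two, mul_le_mul_iff_right₀ two_pos])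
  convert h using 3 <;> ring

theorem clarksonInequality_of_innerProductSpace (𝕜 E : Type*) [RCLike 𝕜]
    [SeminormedAddCommGroup E] [InnerProductSpace 𝕜 E] {m : ℕ} (hm : 2 ≤ m) :
    ClarksonInequality (m / (m - 1)) m E := by
  have hm' : (2 : ℝ) ≤ m := by exact_mod_cast hm
  have exponent : (m : ℝ) / (m / (m - 1)) = (m - 1 : ℕ) := by
    rw [div_div_cancel₀ (by positivity), Nat.cast_pred (by omega)]
  intro x y
  rw [exponent]
  refine (norm_add_rpow_add_norm_sub_rpow_le 𝕜 hm' x y).trans ?_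
  simpa only [Real.rpow_natCast] using
    add_pow_add_abs_sub_pow_le hm (norm_nonneg x) (norm_nonneg y)

section Lp

open scoped ENNReal

variable {α : Type*} [MeasurableSpace α] {μ : Measure α}

-- The triangle inequality for the integral of `a ↦ (f a, g a)` in the `ℓ^s` sum of `E` and `F`.
theorem norm_integral_rpow_add_norm_integral_rpow_le {E F : Type*} [NormedAddCommGroup E]
    [NormedSpace ℝ E] [CompleteSpace E] [NormedAddCommGroup F] [NormedSpace ℝ F] [CompleteSpace F]
    {s : ℝ} (hs : 1 ≤ s) {f : α → E} {g : α → F} (hf : Integrable f μ) (hg : Integrable g μ) :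
    (‖∫ a, f a ∂μ‖ ^ s + ‖∫ a, g a ∂μ‖ ^ s) ^ (1 / s) ≤
      ∫ a, (‖f a‖ ^ s + ‖g a‖ ^ s) ^ (1 / s) ∂μ := by
  have : Fact (1 ≤ ENNReal.ofReal s) := ⟨ENNReal.one_le_ofReal.2 hs⟩
  have hs_toReal : (ENNReal.ofReal s).toReal = s := ENNReal.toReal_ofReal (zero_le_one.trans hs)
  have hs_pos : 0 < (ENNReal.ofReal s).toReal := by linarith
  let fg : α → WithLp (ENNReal.ofReal s) (E × F) := fun a => WithLp.toLp _ (f a, g a)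
  have hfg : Integrable fg μ := integrable_prodLp_iff.2 ⟨hf, hg⟩
  simpa only [WithLp.prod_norm_eq_add hs_pos, fst_integral_withLp hfg, snd_integral_withLp hfg,
    hs_toReal] using! norm_integral_le_integral_norm (μ := μ) fg

variable {E F : Type*} [NormedAddCommGroup E] [NormedAddCommGroup F] {p : ℝ≥0∞}

theorem lpNorm_norm_rpow {f : α → E} (hf : AEStronglyMeasurable f μ) {r : ℝ} (hr : 0 < r) :
    lpNorm (fun a => ‖f a‖ ^ r) (p / ENNReal.ofReal r) μ = lpNorm f p μ ^ r := by
  have hfr : AEStronglyMeasurable (fun a => ‖f a‖ ^ r) μ :=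
    (hf.norm.aemeasurable.pow_const r).aestronglyMeasurable
  rw [← toReal_eLpNorm hfr, ← toReal_eLpNorm hf, eLpNorm_norm_rpow f hr,
    ENNReal.div_mul_cancel (ENNReal.ofReal_pos.2 hr).ne' ENNReal.ofReal_ne_top,
    ENNReal.toReal_rpow]

theorem lpNorm_rpow_toReal_eq_integral (hp₀ : p ≠ 0) (hp : p ≠ ∞) {f : α → E}
    (hf : AEStronglyMeasurable f μ) :
    lpNorm f p μ ^ p.toReal = ∫ a, ‖f a‖ ^ p.toReal ∂μ := by
  rw [lpNorm_eq_integral_norm_rpow_toReal hp₀ hp hf, Real.rpow_inv_rpow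
    (integral_nonneg fun a => by positivity) (ENNReal.toReal_pos hp₀ hp).ne']

theorem aestronglyMeasurable_rpow_add_rpow_rpow {f : α → E} {g : α → F}
    (hf : AEStronglyMeasurable f μ) (hg : AEStronglyMeasurable g μ) (r s : ℝ) :
    AEStronglyMeasurable (fun a => (‖f a‖ ^ r + ‖g a‖ ^ r) ^ s) μ :=
  (((hf.norm.aemeasurable.pow_const r).add (hg.norm.aemeasurable.pow_const r)).pow_const
    s).aestronglyMeasurable

theorem lpNorm_rpow_add_lpNorm_rpow_le {q : ℝ} (hp₀ : p ≠ 0) (hpq : p ≤ ENNReal.ofReal q)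
    {f : α → E} {g : α → F} (hf : MemLp f p μ) (hg : MemLp g p μ) :
    (lpNorm f p μ ^ q + lpNorm g p μ ^ q) ^ (1 / q) ≤
      lpNorm (fun a => (‖f a‖ ^ q + ‖g a‖ ^ q) ^ (1 / q)) p μ := by
  have hp : p ≠ ∞ := ne_top_of_le_ne_top ENNReal.ofReal_ne_top hpq
  have hp_pos : 0 < p.toReal := ENNReal.toReal_pos hp₀ hp
  have hq : 0 < q := ENNReal.ofReal_pos.1 (hp₀.bot_lt.trans_le hpq)
  have hs : 1 ≤ q / p.toReal := (one_le_div hp_pos).2 (ENNReal.toReal_le_of_le_ofReal hq.le hpq)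
  have norm_rpow_rpow {t : ℝ} (ht : 0 ≤ t) : ‖t ^ p.toReal‖ ^ (q / p.toReal) = t ^ q := by
    rw [Real.norm_of_nonneg (by positivity), ← Real.rpow_mul ht, mul_div_cancel₀ _ hp_pos.ne']
  have rpow_rpow_toReal {t : ℝ} (ht : 0 ≤ t) :
      (t ^ (1 / q)) ^ p.toReal = t ^ (1 / (q / p.toReal)) := by
    rw [← Real.rpow_mul ht, one_div_mul_eq_div, one_div_div]
  have hf₀ : 0 ≤ lpNorm f p μ := lpNorm_nonneg
  have hg₀ : 0 ≤ lpNorm g p μ := lpNorm_nonneg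
  refine (Real.rpow_le_rpow_iff (by positivity) lpNorm_nonneg hp_pos).1 ?_
  calc ((lpNorm f p μ ^ q + lpNorm g p μ ^ q) ^ (1 / q)) ^ p.toReal
      = (‖∫ a, ‖f a‖ ^ p.toReal ∂μ‖ ^ (q / p.toReal) +
          ‖∫ a, ‖g a‖ ^ p.toReal ∂μ‖ ^ (q / p.toReal)) ^ (1 / (q / p.toReal)) := by
        rw [← lpNorm_rpow_toReal_eq_integral hp₀ hp hf.1,
          ← lpNorm_rpow_toReal_eq_integral hp₀ hp hg.1, norm_rpow_rpow hf₀,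
          norm_rpow_rpow hg₀, rpow_rpow_toReal (by positivity)]
    _ ≤ ∫ a, (‖‖f a‖ ^ p.toReal‖ ^ (q / p.toReal) +
          ‖‖g a‖ ^ p.toReal‖ ^ (q / p.toReal)) ^ (1 / (q / p.toReal)) ∂μ :=
        norm_integral_rpow_add_norm_integral_rpow_le hs (hf.integrable_norm_rpow hp₀ hp)
          (hg.integrable_norm_rpow hp₀ hp)
    _ = lpNorm (fun a => (‖f a‖ ^ q + ‖g a‖ ^ q) ^ (1 / q)) p μ ^ p.toReal := by
        rw [lpNorm_rpow_toReal_eq_integral hp₀ hp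
          (aestronglyMeasurable_rpow_add_rpow_rpow hf.1 hg.1 q (1 / q))]
        refine integral_congr_ae (.of_forall fun a => ?_)
        beta_reduce
        rw [norm_rpow_rpow (norm_nonneg _), norm_rpow_rpow (norm_nonneg _),
          Real.norm_of_nonneg (by positivity), rpow_rpow_toReal (by positivity)]

theorem norm_rpow_add_rpow_rpow_one_div {a b r : ℝ} (ha : 0 ≤ a) (hb : 0 ≤ b) (hr : 0 < r) :
    ‖(a ^ r + b ^ r) ^ (1 / r)‖ ^ r = a ^ r + b ^ r := by
  rw [Real.norm_of_nonneg (by positivity), one_div, Real.rpow_inv_rpow (by positivity) hr.ne']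

theorem memLp_rpow_add_rpow {r : ℝ} (hr : 0 < r) {f : α → E} {g : α → F} (hf : MemLp f p μ)
    (hg : MemLp g p μ) :
    MemLp (fun a => (‖f a‖ ^ r + ‖g a‖ ^ r) ^ (1 / r)) p μ := by
  have hsum := (hf.norm_rpow_div (ENNReal.ofReal r)).add (hg.norm_rpow_div (ENNReal.ofReal r))
  rw [← memLp_norm_rpow_iff (aestronglyMeasurable_rpow_add_rpow_rpow hf.1 hg.1 r (1 / r))
    (ENNReal.ofReal_pos.2 hr).ne' ENNReal.ofReal_ne_top]
  rw [ENNReal.toReal_ofReal hr.le] at hsum ⊢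
  simpa only [norm_rpow_add_rpow_rpow_one_div (norm_nonneg _) (norm_nonneg _) hr] using! hsum

theorem lpNorm_rpow_add_rpow_le {r : ℝ} (hr : 0 < r) (hrp : ENNReal.ofReal r ≤ p)
    {f : α → E} {g : α → F} (hf : MemLp f p μ) (hg : MemLp g p μ) :
    lpNorm (fun a => (‖f a‖ ^ r + ‖g a‖ ^ r) ^ (1 / r)) p μ ≤
      (lpNorm f p μ ^ r + lpNorm g p μ ^ r) ^ (1 / r) := by
  have hmeas := aestronglyMeasurable_rpow_add_rpow_rpow hf.1 hg.1 r (1 / r)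
  have hpr : 1 ≤ p / ENNReal.ofReal r := by
    rwa [ENNReal.le_div_iff_mul_le (by simp [hr]) (by simp), one_mul]
  have hfr : MemLp (fun a => ‖f a‖ ^ r) (p / ENNReal.ofReal r) μ := by
    simpa [hr.le] using hf.norm_rpow_div (ENNReal.ofReal r)
  have hf₀ : 0 ≤ lpNorm f p μ := lpNorm_nonneg
  have hg₀ : 0 ≤ lpNorm g p μ := lpNorm_nonneg
  rw [one_div r, Real.le_rpow_inv_iff_of_pos lpNorm_nonneg (by positivity) hr, ← one_div,
    ← lpNorm_norm_rpow hmeas hr, ← lpNorm_norm_rpow hf.1 hr, ← lpNorm_norm_rpow hg.1 hr]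
  simp only [norm_rpow_add_rpow_rpow_one_div (norm_nonneg _) (norm_nonneg _) hr]
  exact lpNorm_add_le hfr hpr

theorem ClarksonInequality.lpNorm_le {r q : ℝ} (hr : 0 < r) (hE : ClarksonInequality r q E)
    (hp₀ : p ≠ 0) (hrp : ENNReal.ofReal r ≤ p) (hpq : p ≤ ENNReal.ofReal q) {f g : α → E}
    (hf : MemLp f p μ) (hg : MemLp g p μ) :
    lpNorm (f + g) p μ ^ q + lpNorm (f - g) p μ ^ q ≤
      2 * (lpNorm f p μ ^ r + lpNorm g p μ ^ r) ^ (q / r) := by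
  have hq : 0 < q := ENNReal.ofReal_pos.1 (hp₀.bot_lt.trans_le hpq)
  have rpow_mul_rpow {t : ℝ} (ht : 0 ≤ t) :
      (2 * t ^ (q / r)) ^ (1 / q) = 2 ^ (1 / q) * t ^ (1 / r) := by
    rw [Real.mul_rpow two_pos.le (by positivity), ← Real.rpow_mul ht, mul_one_div,
      div_div_cancel_left' hq.ne', one_div r]
  have pointwise (a : α) : ‖(‖(f + g) a‖ ^ q + ‖(f - g) a‖ ^ q) ^ (1 / q)‖ ≤
      2 ^ (1 / q) * (‖f a‖ ^ r + ‖g a‖ ^ r) ^ (1 / r) := by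
    rw [Real.norm_of_nonneg (by positivity), ← rpow_mul_rpow (by positivity)]
    gcongr
    exact hE (f a) (g a)
  have sum_nonneg (h₁ h₂ : α → E) (s : ℝ) : 0 ≤ lpNorm h₁ p μ ^ s + lpNorm h₂ p μ ^ s :=
    add_nonneg (Real.rpow_nonneg lpNorm_nonneg s) (Real.rpow_nonneg lpNorm_nonneg s)
  refine (Real.rpow_le_rpow_iff (sum_nonneg _ _ q)
    (mul_nonneg two_pos.le (Real.rpow_nonneg (sum_nonneg f g r) _)) (one_div_pos.2 hq)).1 ?_
  calc (lpNorm (f + g) p μ ^ q + lpNorm (f - g) p μ ^ q) ^ (1 / q)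
      ≤ lpNorm (fun a => (‖(f + g) a‖ ^ q + ‖(f - g) a‖ ^ q) ^ (1 / q)) p μ :=
        lpNorm_rpow_add_lpNorm_rpow_le hp₀ hpq (hf.add hg) (hf.sub hg)
    _ ≤ lpNorm ((2 : ℝ) ^ (1 / q) • fun a => (‖f a‖ ^ r + ‖g a‖ ^ r) ^ (1 / r)) p μ :=
        lpNorm_mono_real ((memLp_rpow_add_rpow hr hf hg).const_smul _) pointwise
    _ = 2 ^ (1 / q) * lpNorm (fun a => (‖f a‖ ^ r + ‖g a‖ ^ r) ^ (1 / r)) p μ := by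
        rw [lpNorm_const_smul, coe_nnnorm, Real.norm_of_nonneg (by positivity)]
    _ ≤ 2 ^ (1 / q) * (lpNorm f p μ ^ r + lpNorm g p μ ^ r) ^ (1 / r) := by
        gcongr
        exact lpNorm_rpow_add_rpow_le hr hrp hf hg
    _ = (2 * (lpNorm f p μ ^ r + lpNorm g p μ ^ r) ^ (q / r)) ^ (1 / q) :=
        (rpow_mul_rpow (sum_nonneg f g r)).symm

theorem ClarksonInequality.lp {r q : ℝ} (hr : 0 < r) (hE : ClarksonInequality r q E)
    [Fact (1 ≤ p)] (hrp : ENNReal.ofReal r ≤ p) (hpq : p ≤ ENNReal.ofReal q) :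
    ClarksonInequality r q (Lp E p μ) := by
  intro x y
  have hx := Lp.memLp x
  have hy := Lp.memLp y
  have hp₀ : p ≠ 0 := (zero_lt_one.trans_le (Fact.out : 1 ≤ p)).ne'
  rw [Lp.norm_def, Lp.norm_def, Lp.norm_def, Lp.norm_def, eLpNorm_congr_ae (Lp.coeFn_add x y),
    eLpNorm_congr_ae (Lp.coeFn_sub x y), toReal_eLpNorm (hx.add hy).1,
    toReal_eLpNorm (hx.sub hy).1, toReal_eLpNorm hx.1, toReal_eLpNorm hy.1]
  exact hE.lpNorm_le hr hp₀ hrp hpq hx hy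

end Lp

section Bernstein

open scoped ContDiff

variable {E G : Type*} [NormedAddCommGroup E] [NormedSpace ℂ E] [NormedAddCommGroup G]
  [NormedSpace ℂ G]

-- Averaging `f z` with `(-1) ^ k • f (-z)` keeps the Taylor coefficients of the parity of `k`.
theorem norm_iteratedDeriv_le_of_norm_add_norm_neg_le [CompleteSpace G] {f : ℂ → G}
    (hf : Differentiable ℂ f) {R C : ℝ} (hR : 0 < R)
    (hC : ∀ z ∈ sphere (0 : ℂ) R, ‖f z‖ + ‖f (-z)‖ ≤ 2 * C) (k : ℕ) :
    ‖iteratedDeriv k f 0‖ ≤ k.factorial * C / R ^ k := by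
  have hfneg : Differentiable ℂ fun z => f (-z) := hf.comp differentiable_neg
  have hfneg' : Differentiable ℂ fun z => (-1 : ℂ) ^ k • f (-z) := hfneg.fun_const_smul _
  set g : ℂ → G := fun z => (2⁻¹ : ℂ) • (f z + (-1 : ℂ) ^ k • f (-z)) with hg
  have deriv_eq : iteratedDeriv k g 0 = iteratedDeriv k f 0 := by
    rw [hg, iteratedDeriv_fun_const_smul_field, iteratedDeriv_fun_add hf.contDiff.contDiffAt
      hfneg'.contDiff.contDiffAt, iteratedDeriv_fun_const_smul_field,
      iteratedDeriv_comp_neg, neg_zero, smul_smul, ← mul_pow, neg_one_mul, neg_neg, one_pow,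
      one_smul, ← two_smul ℂ, inv_smul_smul₀ two_ne_zero]
  rw [← deriv_eq]
  refine Complex.norm_iteratedDeriv_le_of_forall_mem_sphere_norm_le k hR
    ((hf.add hfneg').const_smul _).diffContOnCl fun z hz => ?_
  calc ‖g z‖ ≤ 2⁻¹ * (‖f z‖ + ‖f (-z)‖) := by
        rw [hg, norm_smul, norm_inv, Complex.norm_ofNat]
        gcongr
        refine (norm_add_le _ _).trans_eq ?_
        rw [norm_smul, norm_pow, norm_neg, norm_one, one_pow, one_mul]
    _ ≤ C := by linarith [hC z hz]

theorem iteratedDeriv_comp_add_smul {F : E → G} {k : ℕ} (hF : ContDiff ℂ k F) (x y : E) :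
    iteratedDeriv k (fun w : ℂ => F (x + w • y)) 0 = iteratedFDeriv ℂ k F x fun _ => y := by
  have hFx : ContDiff ℂ k fun z => F (x + z) := hF.comp (contDiff_const.add contDiff_id)
  have h := (ContinuousLinearMap.toSpanSingleton ℂ y).iteratedFDeriv_comp_right hFx 0 le_rfl
  rw [iteratedDeriv_eq_iteratedFDeriv]
  simpa [Function.comp_def, iteratedFDeriv_comp_add_left] using
    congrArg (fun M => M fun _ => (1 : ℂ)) h

theorem ClarksonInequality.norm_iteratedFDeriv_apply_le [CompleteSpace G] {m : ℕ} {r : ℝ}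
    (hr : 0 < r) (hE : ClarksonInequality r m E) {F : E → G} (hF : ContDiff ℂ ∞ F) {S : ℝ}
    (hS₀ : 0 ≤ S) (hS : ∀ u, ‖F u‖ ≤ S * ‖u‖ ^ m) {x y : E} (hx : ‖x‖ < 1) (hy : ‖y‖ ≤ 1)
    (k : ℕ) :
    ‖iteratedFDeriv ℂ k F x fun _ => y‖ ≤
      k.factorial * (1 - ‖x‖ ^ r) ^ (-(k : ℝ) / r) * S := by
  have hδ : 0 < 1 - ‖x‖ ^ r := sub_pos.2 (Real.rpow_lt_one (norm_nonneg x) hx hr)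
  set R := (1 - ‖x‖ ^ r) ^ r⁻¹ with hRdef
  have hR : 0 < R := by positivity
  have hRr : R ^ r = 1 - ‖x‖ ^ r := Real.rpow_inv_rpow hδ.le hr.ne'
  have hRk : (1 - ‖x‖ ^ r) ^ (-(k : ℝ) / r) = (R ^ k)⁻¹ := by
    rw [hRdef, ← Real.rpow_mul_natCast hδ.le, ← Real.rpow_neg hδ.le]
    congr 1
    ring
  have hslice : Differentiable ℂ fun w : ℂ => F (x + w • y) :=
    (hF.differentiable (by simp)).comp (by fun_prop)
  rw [← iteratedDeriv_comp_add_smul (contDiff_infty.1 hF k), hRk, mul_right_comm, ← div_eq_mul_inv]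
  refine norm_iteratedDeriv_le_of_norm_add_norm_neg_le hslice hR (fun w hw => ?_) k
  have hxwy : ‖x‖ ^ r + ‖w • y‖ ^ r ≤ 1 := by
    have hwy : ‖w • y‖ ≤ R := by
      rw [norm_smul, mem_sphere_zero_iff_norm.1 hw]
      exact mul_le_of_le_one_right hR.le hy
    linarith [Real.rpow_le_rpow (norm_nonneg _) hwy hr.le]
  have hclarkson : ‖x + w • y‖ ^ m + ‖x - w • y‖ ^ m ≤ 2 := by
    have h := hE x (w • y)
    simp only [Real.rpow_natCast] at h
    linarith [Real.rpow_le_one (by positivity) hxwy (by positivity : 0 ≤ m / r)]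
  calc ‖F (x + w • y)‖ + ‖F (x + -w • y)‖
      ≤ S * ‖x + w • y‖ ^ m + S * ‖x - w • y‖ ^ m := by
        rw [neg_smul, ← sub_eq_add_neg]
        exact add_le_add (hS _) (hS _)
    _ ≤ 2 * S := by
        rw [← mul_add, mul_comm 2]
        gcongr

end Bernstein

theorem norm_apply_diagonal_le_sSup_mul_norm_pow {𝕜 E G : Type*} [RCLike 𝕜]
    [NormedAddCommGroup E] [NormedSpace 𝕜 E] [NormedAddCommGroup G] [NormedSpace 𝕜 G] {m : ℕ}
    (L : ContinuousMultilinearMap 𝕜 (fun _ : Fin m => E) G) (u : E) :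
    ‖L fun _ => u‖ ≤ sSup ((fun v => ‖L fun _ => v‖) '' closedBall (0 : E) 1) * ‖u‖ ^ m := by
  have hbdd : BddAbove ((fun v => ‖L fun _ => v‖) '' closedBall (0 : E) 1) := by
    refine ⟨‖L‖, ?_⟩
    rintro _ ⟨v, hv, rfl⟩
    refine L.unit_le_opNorm ?_
    exact (pi_norm_const_le v).trans (mem_closedBall_zero_iff.1 hv)
  set v : E := (‖u‖⁻¹ : 𝕜) • u with hv
  have hv1 : v ∈ closedBall (0 : E) 1 := by
    rw [mem_closedBall_zero_iff, hv, norm_smul, norm_inv, RCLike.norm_coe_norm]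
    exact inv_mul_le_one
  have hu : u = (‖u‖ : 𝕜) • v := by
    rcases eq_or_ne u 0 with rfl | hu
    · simp
    · exact (smul_inv_smul₀ (by simpa using hu) u).symm
  calc ‖L fun _ => u‖ = ‖L fun _ => v‖ * ‖u‖ ^ m := by
        conv_lhs => rw [hu]
        rw [L.map_smul_univ]
        simp [norm_smul, mul_comm]
    _ ≤ sSup ((fun v => ‖L fun _ => v‖) '' closedBall (0 : E) 1) * ‖u‖ ^ m := by
        gcongr
        exact le_csSup hbdd ⟨v, hv1, rfl⟩

theorem bernstein_homogeneous_Lp_middle_p_general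
    {α : Type*} [MeasurableSpace α] (μ : Measure α)
    {H G : Type*} [NormedAddCommGroup H] [InnerProductSpace ℂ H]
    [NormedAddCommGroup G] [NormedSpace ℂ G] [CompleteSpace G]
    (m k : ℕ) (hm : 2 ≤ m) (p : ℝ)
    (hp1 : (m : ℝ) / ((m : ℝ) - 1) ≤ p) (hpm : p ≤ (m : ℝ))
    [Fact (1 ≤ ENNReal.ofReal p)]
    (L : ContinuousMultilinearMap ℂ (fun _ : Fin m => Lp H (ENNReal.ofReal p) μ) G)
    (x : Lp H (ENNReal.ofReal p) μ) (hx : ‖x‖ < 1) :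
    sSup ((fun y => ‖iteratedFDeriv ℂ k (fun u => L fun _ => u) x (fun _ => y)‖)
        '' closedBall (0 : Lp H (ENNReal.ofReal p) μ) 1)
      ≤ (k.factorial : ℝ)
          * (1 - ‖x‖ ^ ((m : ℝ) / ((m : ℝ) - 1))) ^ (-(k : ℝ) / ((m : ℝ) / ((m : ℝ) - 1)))
          * sSup ((fun y => ‖L fun _ => y‖) '' closedBall (0 : Lp H (ENNReal.ofReal p) μ) 1) := by
  have hm' : (1 : ℝ) < m := by exact_mod_cast hm
  have hr : 0 < (m : ℝ) / (m - 1) := div_pos (by linarith) (by linarith)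
  have clarkson : ClarksonInequality (m / (m - 1)) m (Lp H (ENNReal.ofReal p) μ) :=
    (clarksonInequality_of_innerProductSpace ℂ H hm).lp hr (ENNReal.ofReal_le_ofReal hp1)
      (ENNReal.ofReal_le_ofReal hpm)
  have smooth : ContDiff ℂ (⊤ : ℕ∞) fun u => L fun _ => u :=
    L.contDiff.comp (contDiff_pi.2 fun _ => contDiff_id)
  have sSup_nonneg : 0 ≤ sSup ((fun y => ‖L fun _ => y‖) '' closedBall 0 1) :=
    Real.sSup_nonneg (Set.forall_mem_image.2 fun _ _ => norm_nonneg _)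
  refine csSup_le ((nonempty_closedBall.2 zero_le_one).image _)
    (Set.forall_mem_image.2 fun y hy => ?_)
  exact clarkson.norm_iteratedFDeriv_apply_le hr smooth sSup_nonneg
    (norm_apply_diagonal_le_sSup_mul_norm_pow L) hx (mem_closedBall_zero_iff.1 hy) k

/-- Bernstein-type inequality for an `m`-homogeneous polynomial on a complex `L_p(μ)`
space with `m' ≤ p ≤ m`, where `m' = m/(m-1)`: for `k ≤ m` and `‖x‖_p < 1`,
`‖D̂^k L̂(x)‖ ≤ k! (1 - ‖x‖_p^{m'})^(-k/m') ‖L̂‖`. -/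
theorem bernstein_homogeneous_Lp_middle_p
    {α : Type*} [MeasurableSpace α] (μ : Measure α)
    (m k : ℕ) (hm : 2 ≤ m) (hk : k ≤ m) (p : ℝ)
    (hp1 : (m : ℝ) / ((m : ℝ) - 1) ≤ p) (hpm : p ≤ (m : ℝ))
    [Fact (1 ≤ ENNReal.ofReal p)]
    (F : Lp ℂ (ENNReal.ofReal p) μ → ℂ)
    (hF : ∃ L : ContinuousMultilinearMap ℂ (fun _ : Fin m => Lp ℂ (ENNReal.ofReal p) μ) ℂ,
      (∀ (σ : Equiv.Perm (Fin m)) (v : Fin m → Lp ℂ (ENNReal.ofReal p) μ), L (v ∘ σ) = L v) ∧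
      ∀ u, F u = L (fun _ => u))
    (x : Lp ℂ (ENNReal.ofReal p) μ) (hx : ‖x‖ < 1) :
    sSup ((fun y => ‖iteratedFDeriv ℂ k F x (fun _ => y)‖)
        '' closedBall (0 : Lp ℂ (ENNReal.ofReal p) μ) 1)
      ≤ (k.factorial : ℝ)
          * (1 - ‖x‖ ^ ((m : ℝ) / ((m : ℝ) - 1))) ^ (-(k : ℝ) / ((m : ℝ) / ((m : ℝ) - 1)))
          * sSup ((fun y => ‖F y‖) '' closedBall (0 : Lp ℂ (ENNReal.ofReal p) μ) 1) := by
  obtain ⟨L, -, hL⟩ := hF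
  obtain rfl : F = fun u => L fun _ => u := funext hL
  exact bernstein_homogeneous_Lp_middle_p_general μ m k hm p hp1 hpm L x hx
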